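/- arXiv:1211.1555 — 5 statements merged into one kernel-verified Lean document; each statement's English description precedes it below -/
import Mathlib

section
/- Let C be a closed symmetric monoidal category, let (D_i)_{i ∈ I} be a family of closed symmetric monoidal categories, and let F_i : C ⥤ D_i be strong monoidal functors each of which is closed, i.e. for all objects X, Y of C the canonical comparison morphism F_i([X, Y]) ⟶ [F_i X, F_i Y] between internal homs is an isomorphism. Assume the family (F_i) is jointly conservative: a morphism g of C is an isomorphism whenever F_i(g) is an isomorphism for every i ∈ I. If M is an object of C such that F_i(M) has a right dual in D_i for every i ∈ I, then M has a right dual in C. -/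
open CategoryTheory CategoryTheory.MonoidalCategory CategoryTheory.MonoidalClosed

/-- The canonical comparison morphism `F([X, Y]) ⟶ [F X, F Y]` between internal homs,
for a (lax) monoidal functor `F` between monoidal closed categories. -/
noncomputable def ihomComparison {C D : Type*} [Category C] [Category D]
    [MonoidalCategory C] [MonoidalCategory D] [MonoidalClosed C] [MonoidalClosed D]
    (F : C ⥤ D) [F.LaxMonoidal] (X Y : C) :
    F.obj ((ihom X).obj Y) ⟶ (ihom (F.obj X)).obj (F.obj Y) :=
  MonoidalClosed.curry
    (Functor.LaxMonoidal.μ F X ((ihom X).obj Y) ≫ F.map ((ihom.ev X).app Y))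

open Functor.LaxMonoidal Functor.OplaxMonoidal in
/-- The canonical map `[X, 𝟙] ⊗ Y ⟶ [X, Y]`. -/
noncomputable def dualMap {C : Type*} [Category C] [MonoidalCategory C] [MonoidalClosed C]
    (X Y : C) : (ihom X).obj (𝟙_ C) ⊗ Y ⟶ (ihom X).obj Y :=
  MonoidalClosed.curry ((α_ _ _ _).inv ≫ (ihom.ev X).app (𝟙_ C) ▷ Y ≫ (λ_ Y).hom)

theorem isIso_curry_aux {C : Type*} [Category C] [MonoidalCategory C] [MonoidalClosed C]
    (X' X : C) [ExactPairing X' X] (Y : C) :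
    IsIso (MonoidalClosed.curry ((α_ X X' Y).inv ≫ (ExactPairing.evaluation X' X) ▷ Y ≫
      (λ_ Y).hom)) := by
  have : (MonoidalClosed.curry ((α_ X X' Y).inv ≫ (ExactPairing.evaluation X' X) ▷ Y ≫
      (λ_ Y).hom)) =
      (((tensorLeftAdjunction X' X).rightAdjointUniq (ihom.adjunction X)).app Y).hom := by
    apply MonoidalClosed.uncurry_injective
    rw [MonoidalClosed.uncurry_curry, MonoidalClosed.uncurry_eq]
    have := (tensorLeftAdjunction X' X).rightAdjointUniq_hom_app_counit (ihom.adjunction X) Y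
    refine Eq.trans ?_ this.symm
    simp [tensorLeftAdjunction, tensorLeftHomEquiv, Adjunction.mkOfHomEquiv]
  rw [this]
  infer_instance

theorem isIso_dualMap_of_exactPairing {C : Type*} [Category C] [MonoidalCategory C]
    [MonoidalClosed C] (X' X : C) [ExactPairing X' X] (Y : C) : IsIso (dualMap X Y) := by
  let c : X' ⟶ (ihom X).obj (𝟙_ C) := MonoidalClosed.curry (ExactPairing.evaluation X' X)
  have hc : IsIso c := by
    have h1 : (ρ_ X').hom ≫ c = MonoidalClosed.curry ((α_ X X' (𝟙_ C)).inv ≫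
        (ExactPairing.evaluation X' X) ▷ (𝟙_ C) ≫ (λ_ (𝟙_ C)).hom) := by
      rw [← MonoidalClosed.curry_natural_left]
      congr 1
      rw [unitors_equal, rightUnitor_naturality]
      simp
    have := isIso_curry_aux X' X (𝟙_ C)
    rw [← h1] at this
    exact IsIso.of_isIso_comp_left (ρ_ X').hom c
  have h2 : c ▷ Y ≫ dualMap X Y = MonoidalClosed.curry ((α_ X X' Y).inv ≫
      (ExactPairing.evaluation X' X) ▷ Y ≫ (λ_ Y).hom) := by
    rw [dualMap, ← MonoidalClosed.curry_natural_left]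
    congr 1
    have : X ◁ c ≫ (ihom.ev X).app (𝟙_ C) = ExactPairing.evaluation X' X := by
      rw [← MonoidalClosed.uncurry_eq, MonoidalClosed.uncurry_curry]
    rw [← this]
    simp
  have := isIso_curry_aux X' X Y
  rw [← h2] at this
  exact IsIso.of_isIso_comp_left (c ▷ Y) _

theorem nonempty_exactPairing {C : Type*} [Category C] [MonoidalCategory C]
    [MonoidalClosed C] (M : C) [IsIso (dualMap M M)] :
    Nonempty (ExactPairing ((ihom M).obj (𝟙_ C)) M) := by
  let e : M ⊗ (ihom M).obj (𝟙_ C) ⟶ 𝟙_ C := (ihom.ev M).app (𝟙_ C)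
  let h : 𝟙_ C ⟶ (ihom M).obj (𝟙_ C) ⊗ M := MonoidalClosed.curry (ρ_ M).hom ≫ inv (dualMap M M)
  have h1 : M ◁ h ≫ (α_ _ _ _).inv ≫ e ▷ M = (ρ_ M).hom ≫ (λ_ M).inv := by
    have : h ≫ dualMap M M = MonoidalClosed.curry (ρ_ M).hom := by simp [h]
    rw [dualMap, ← MonoidalClosed.curry_natural_left] at this
    have := MonoidalClosed.curry_injective this
    rw [← this]
    simp [e]
  refine ⟨⟨h, e, h1, ?_⟩⟩
  rw [← cancel_mono (ρ_ _).hom]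
  apply MonoidalClosed.uncurry_injective
  rw [MonoidalClosed.uncurry_eq, MonoidalClosed.uncurry_eq]
  change _ ≫ e = _ ≫ e
  let N := (ihom M).obj (𝟙_ C)
  calc _ = M ◁ h ▷ N ⊗≫ ((M ⊗ N) ◁ e ≫ e ▷ 𝟙_ C) ⊗≫ 𝟙 (𝟙_ C) := by monoidal
    _ = M ◁ h ▷ N ⊗≫ (e ▷ (M ⊗ N) ≫ 𝟙_ C ◁ e) ⊗≫ 𝟙 (𝟙_ C) := by rw [whisker_exchange]
    _ = 𝟙 _ ⊗≫ (M ◁ h ≫ (α_ _ _ _).inv ≫ e ▷ M) ▷ N ⊗≫ e := by monoidal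
    _ = _ := by rw [h1]; monoidal

open Functor.LaxMonoidal Functor.OplaxMonoidal in
theorem map_dualMap {C D : Type*} [Category C] [Category D]
    [MonoidalCategory C] [MonoidalCategory D] [MonoidalClosed C] [MonoidalClosed D]
    (F : C ⥤ D) [F.Monoidal] (X Y : C) :
    μ F _ Y ≫ F.map (dualMap X Y) ≫ ihomComparison F X Y =
      (ihomComparison F X (𝟙_ C) ≫ (ihom (F.obj X)).map (η F)) ▷ F.obj Y ≫
        dualMap (F.obj X) (F.obj Y) := by
  have hR : F.obj X ◁ (ihomComparison F X (𝟙_ C) ≫ (ihom (F.obj X)).map (η F)) ≫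
      (ihom.ev (F.obj X)).app (𝟙_ D) = μ F _ _ ≫ F.map ((ihom.ev X).app (𝟙_ C)) ≫ η F := by
    rw [← MonoidalClosed.uncurry_eq, MonoidalClosed.uncurry_natural_right, ihomComparison,
      MonoidalClosed.uncurry_curry, Category.assoc]
  have hL : X ◁ dualMap X Y ≫ (ihom.ev X).app Y =
      (α_ _ _ _).inv ≫ (ihom.ev X).app (𝟙_ C) ▷ Y ≫ (λ_ Y).hom := by
    rw [← MonoidalClosed.uncurry_eq, dualMap, MonoidalClosed.uncurry_curry]
  rw [ihomComparison, dualMap.eq_1 (F.obj X), ← MonoidalClosed.curry_natural_left,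
    ← MonoidalClosed.curry_natural_left, ← MonoidalClosed.curry_natural_left]
  congr 1
  rw [associator_inv_naturality_middle_assoc, ← comp_whiskerRight_assoc, hR,
    μ_natural_right_assoc, ← F.map_comp, hL]
  simp

/-- Let `C` and the `D i` be closed symmetric monoidal categories, and let
`F i : C ⥤ D i` be a jointly conservative family of strong monoidal functors, each of
which is closed (the internal-hom comparison morphisms are isomorphisms).  If `M : C`
is such that each `F i |>.obj M` has a right dual, then `M` has a right dual. -/
theorem hasRightDual_of_jointly_conservative {C : Type*} [Category C]
    [MonoidalCategory C] [SymmetricCategory C] [MonoidalClosed C]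
    {I : Type*} (D : I → Type*) [∀ i, Category (D i)] [∀ i, MonoidalCategory (D i)]
    [∀ i, SymmetricCategory (D i)] [∀ i, MonoidalClosed (D i)]
    (F : ∀ i, C ⥤ D i) [∀ i, (F i).Monoidal]
    (hclosed : ∀ (i : I) (X Y : C), IsIso (ihomComparison (F i) X Y))
    (hcons : ∀ {X Y : C} (g : X ⟶ Y), (∀ i, IsIso ((F i).map g)) → IsIso g)
    (M : C) (hM : ∀ i, Nonempty (HasRightDual ((F i).obj M))) :
    Nonempty (HasRightDual M) := by
  have : IsIso (dualMap M M) := by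
    apply hcons
    intro i
    obtain ⟨hd⟩ := hM i
    letI : HasLeftDual ((F i).obj M) := BraidedCategory.hasLeftDualOfHasRightDual
    have := isIso_dualMap_of_exactPairing (HasLeftDual.leftDual ((F i).obj M)) ((F i).obj M)
      ((F i).obj M)
    have := hclosed i M M
    have := hclosed i M (𝟙_ C)
    have h := map_dualMap (F i) M M
    have h2 : IsIso (Functor.LaxMonoidal.μ (F i) _ M ≫ (F i).map (dualMap M M) ≫
        ihomComparison (F i) M M) := by
      rw [h]; infer_instance
    have h3 := IsIso.of_isIso_comp_left (Functor.LaxMonoidal.μ (F i) _ M)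
      ((F i).map (dualMap M M) ≫ ihomComparison (F i) M M)
    exact IsIso.of_isIso_comp_right _ (ihomComparison (F i) M M)
  obtain ⟨hp⟩ := nonempty_exactPairing M
  letI : HasLeftDual M := ⟨(ihom M).obj (𝟙_ C)⟩
  exact ⟨BraidedCategory.hasRightDualOfHasLeftDual⟩
end

section
/- Let R be a commutative ring. An object M of the monoidal category ModuleCat R (the category of R-modules with the tensor product over R) has a right dual if and only if the underlying R-module M is finitely generated and projective. -/
open CategoryTheory CategoryTheory.MonoidalCategory

open TensorProduct in
lemma aux_zigzag_right {R M N : Type*} [CommRing R] [AddCommGroup M] [Module R M]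
    [AddCommGroup N] [Module R N] (e : N ⊗[R] M →ₗ[R] R) (t : M ⊗[R] N) (m : M) :
    e.lTensor M (TensorProduct.assoc R M N M (t ⊗ₜ[R] m)) =
      (dualTensorHom R M M ((TensorProduct.curry e).rTensor M (TensorProduct.comm R M N t)) m)
        ⊗ₜ[R] (1 : R) := by
  induction t with
  | zero => simp
  | add x y hx hy => simp only [add_tmul, map_add, hx, hy, LinearMap.add_apply]
  | tmul a n => simp [smul_tmul]

open TensorProduct in
lemma aux_zigzag_left {R M : Type*} [CommRing R] [AddCommGroup M] [Module R M]
    (t : M ⊗[R] Module.Dual R M) (f : Module.Dual R M) :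
    (contractLeft R M).rTensor (Module.Dual R M)
      ((TensorProduct.assoc R (Module.Dual R M) M (Module.Dual R M)).symm (f ⊗ₜ[R] t)) =
      (1 : R) ⊗ₜ[R] (f ∘ₗ dualTensorHom R M M (TensorProduct.comm R M _ t)) := by
  induction t with
  | zero => simp
  | add x y hx hy => simp only [tmul_add, map_add, hx, hy, LinearMap.comp_add]
  | tmul a n =>
    have : f ∘ₗ dualTensorHom R M M (n ⊗ₜ[R] a) = f a • n := by
      ext x; simp [mul_comm]
    simp [smul_tmul', this]

/-- An object `M` of the monoidal category `ModuleCat R` (modules over a commutative ring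
`R` with the tensor product) has a right dual if and only if the underlying module is
finitely generated and projective. -/
theorem moduleCat_hasRightDual_iff_finite_projective (R : Type*) [CommRing R]
    (M : ModuleCat R) :
    (∃ N : ModuleCat R, Nonempty (ExactPairing M N)) ↔
      (Module.Finite R M ∧ Module.Projective R M) := by
  constructor
  · rintro ⟨N, ⟨P⟩⟩
    have key : (1 : Module.End R M) ∈ LinearMap.range (dualTensorHom R M M) := by
      let e : TensorProduct R N M →ₗ[R] R := P.evaluation'.hom
      let c : R →ₗ[R] TensorProduct R M N := P.coevaluation'.hom
      refine ⟨(TensorProduct.curry e).rTensor M (TensorProduct.comm R M N (c 1)), ?_⟩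
      ext m
      have h := congrArg (fun f => f.hom ((1 : R) ⊗ₜ[R] m)) P.evaluation_coevaluation'
      have h1 : e.lTensor M (TensorProduct.assoc R M N M (c 1 ⊗ₜ[R] m)) =
          (TensorProduct.rid R M).symm (TensorProduct.lid R M ((1 : R) ⊗ₜ[R] m)) := h
      rw [aux_zigzag_right] at h1
      simpa using congrArg (TensorProduct.rid R M) h1
    exact ⟨.of_one_mem_range_dualTensorHom key, .of_one_mem_range_dualTensorHom key⟩
  · rintro ⟨_, _⟩
    obtain ⟨s, hs⟩ := (dualTensorHom_bijective (R := R) (M := M) (N := M)).2 LinearMap.id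
    let t : TensorProduct R M (Module.Dual R M) := (TensorProduct.comm R M _).symm s
    have ht : dualTensorHom R M M (TensorProduct.comm R M _ t) = LinearMap.id := by
      simp [t, hs]
    refine ⟨ModuleCat.of R (Module.Dual R M), ⟨
      { coevaluation' := ModuleCat.ofHom (LinearMap.toSpanSingleton R _ t)
        evaluation' := ModuleCat.ofHom (contractLeft R M)
        coevaluation_evaluation' := ?_
        evaluation_coevaluation' := ?_ }⟩⟩
    · ext : 1
      refine TensorProduct.ext' fun f r => ?_
      change (contractLeft R M).rTensor (Module.Dual R M)
        ((TensorProduct.assoc R (Module.Dual R M) M (Module.Dual R M)).symm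
          (f ⊗ₜ[R] ((r : R) • t))) =
        (TensorProduct.lid R (Module.Dual R M)).symm
          (TensorProduct.rid R (Module.Dual R M) (f ⊗ₜ[R] (r : R)))
      rw [TensorProduct.tmul_smul, map_smul, map_smul, aux_zigzag_left, ht]
      simp
    · ext : 1
      refine TensorProduct.ext' fun r m => ?_
      change (contractLeft R M).lTensor M
        (TensorProduct.assoc R M (Module.Dual R M) M (((r : R) • t) ⊗ₜ[R] m)) =
        (TensorProduct.rid R M).symm (TensorProduct.lid R M ((r : R) ⊗ₜ[R] m))
      have hc : TensorProduct.curry (contractLeft R M) = LinearMap.id := by ext; simp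
      rw [← TensorProduct.smul_tmul', map_smul, map_smul, aux_zigzag_right, hc,
        LinearMap.rTensor_id, LinearMap.id_apply, ht]
      simp [TensorProduct.smul_tmul']
end

section
/- Let A be a type and (M a)_{a ∈ A} a family of abelian groups (ℤ-modules). The direct sum ⨁_{a ∈ A} M a is a finitely generated projective ℤ-module if and only if each M a is finitely generated and projective and M a is the zero group for all but finitely many a, i.e. the set {a : A | M a ≠ 0} is finite. -/
open DirectSum

/-- The same statement over an arbitrary ring, which fixes the module structure on the direct
sum to be the componentwise one. -/
theorem directSum_finite_projective_iff_aux {R : Type*} [Ring R] {A : Type*} [DecidableEq A]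
    (M : A → Type*) [∀ a, AddCommGroup (M a)] [∀ a, Module R (M a)] :
    (Module.Finite R (⨁ a, M a) ∧ Module.Projective R (⨁ a, M a)) ↔
      ((∀ a, Module.Finite R (M a) ∧ Module.Projective R (M a)) ∧
        {a : A | ∃ x : M a, x ≠ 0}.Finite) := by
  classical
  rw [Module.Projective.directSum_iff]
  constructor
  · rintro ⟨hF, hP⟩
    refine ⟨fun a => ⟨?_, hP a⟩, ?_⟩
    · refine Module.Finite.of_surjective (DirectSum.component R A M a) fun x => ?_
      exact ⟨DirectSum.lof R A M a x, DirectSum.component.lof_self R a x⟩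
    · obtain ⟨S, hS⟩ := hF.fg_top
      refine (S.biUnion fun s => DFinsupp.support s).finite_toSet.subset ?_
      rintro a ⟨x, hx⟩
      by_contra hn
      have hle : Submodule.span R (S : Set (⨁ a, M a)) ≤
          LinearMap.ker (DirectSum.component R A M a) := by
        rw [Submodule.span_le]
        intro s hs
        by_contra h
        apply hn
        simp only [Finset.coe_biUnion, Set.mem_iUnion]
        exact ⟨s, hs, DFinsupp.mem_support_iff.2 h⟩
      rw [hS] at hle
      have h0 := hle (Submodule.mem_top (x := DirectSum.lof R A M a x))
      rw [LinearMap.mem_ker, DirectSum.component.lof_self] at h0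
      exact hx h0
  · rintro ⟨h, hfin⟩
    refine ⟨⟨?_⟩, fun a => (h a).2⟩
    have key : (⊤ : Submodule R (⨁ a, M a)) =
        ⨆ a ∈ hfin.toFinset, LinearMap.range (DirectSum.lof R A M a) := by
      symm
      rw [eq_top_iff]
      rintro x -
      induction x using DirectSum.induction_on with
      | zero => exact zero_mem _
      | add x y hx hy => exact add_mem hx hy
      | of a x =>
        by_cases hx : x = 0
        · subst hx; rw [map_zero]; exact zero_mem _
        · exact Submodule.mem_iSup_of_mem a (Submodule.mem_iSup_of_mem
            (hfin.mem_toFinset.2 ⟨x, hx⟩) ⟨x, rfl⟩)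
    rw [key]
    refine Submodule.fg_biSup _ _ fun a _ => ?_
    have := (h a).1
    rw [LinearMap.range_eq_map]
    exact (Module.Finite.fg_top).map _

/-- A direct sum `⨁ a, M a` of a family of abelian groups (`ℤ`-modules) is a finitely
generated projective `ℤ`-module if and only if each `M a` is finitely generated and
projective and all but finitely many `M a` are zero. -/
theorem directSum_finite_projective_iff {A : Type*} [DecidableEq A] (M : A → Type*)
    [∀ a, AddCommGroup (M a)] [∀ a, Module ℤ (M a)] :
    (Module.Finite ℤ (⨁ a, M a) ∧ Module.Projective ℤ (⨁ a, M a)) ↔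
      ((∀ a, Module.Finite ℤ (M a) ∧ Module.Projective ℤ (M a)) ∧
        {a : A | ∃ x : M a, x ≠ 0}.Finite) := by
  have h := directSum_finite_projective_iff_aux (R := ℤ) M
  have e : (AddCommGroup.toIntModule (⨁ a, M a)) =
      (DirectSum.instModule : Module ℤ (⨁ a, M a)) := Subsingleton.elim _ _
  rw [e]
  exact h
end

section
/- Let k be a commutative ring and G a group. The quotient of the group algebra k[G] = MonoidAlgebra k G by the k-submodule spanned by all commutators x*y − y*x (for x, y ∈ k[G]) is isomorphic as a k-module to the free k-module (ConjClasses G →₀ k) on the set of conjugacy classes of G, via the k-linear isomorphism induced by sending the basis element of a group element g to the basis element of its conjugacy class ⟦g⟧. -/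
/-- For a commutative ring `k` and a group `G`, the quotient of the group algebra
`k[G]` by the `k`-submodule spanned by all commutators `x*y - y*x` is isomorphic, as a
`k`-module, to the free `k`-module on the set of conjugacy classes of `G`, via the map
induced by `g ↦ ⟦g⟧`. -/
theorem groupAlgebra_quotient_commutators_equiv_conjClasses (k : Type*) [CommRing k]
    (G : Type*) [Group G] :
    ∃ e : (MonoidAlgebra k G ⧸ Submodule.span k
          {z : MonoidAlgebra k G | ∃ x y : MonoidAlgebra k G, z = x * y - y * x})
        ≃ₗ[k] (ConjClasses G →₀ k),
      ∀ g : G,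
        e (Submodule.Quotient.mk (MonoidAlgebra.of k G g)) =
          Finsupp.single (ConjClasses.mk g) 1 := by
  classical
  set S := Submodule.span k
    {z : MonoidAlgebra k G | ∃ x y : MonoidAlgebra k G, z = x * y - y * x} with hS
  -- the map `k[G] → k[Conj G]`
  let f : MonoidAlgebra k G →ₗ[k] (ConjClasses G →₀ k) :=
    (Finsupp.lmapDomain k k (ConjClasses.mk : G → ConjClasses G)) ∘ₗ
      (MonoidAlgebra.coeffLinearEquiv k).toLinearMap
  have hf : ∀ g : G, f (MonoidAlgebra.of k G g) = Finsupp.single (ConjClasses.mk g) 1 := by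
    intro g
    simp [f, MonoidAlgebra.of_apply]
  have hcomm : ∀ x y : MonoidAlgebra k G, f (x * y) = f (y * x) := by
    intro x y
    induction x using MonoidAlgebra.induction_on with
    | of g =>
      induction y using MonoidAlgebra.induction_on with
      | of h =>
        rw [← map_mul, ← map_mul, hf, hf]
        congr 1
        rw [ConjClasses.mk_eq_mk_iff_isConj, isConj_iff]
        exact ⟨h, by group⟩
      | add a b ha hb => rw [mul_add, add_mul, map_add, map_add, ha, hb]
      | smul r a ha => rw [mul_smul_comm, smul_mul_assoc, map_smul, map_smul, ha]
    | add a b ha hb => rw [mul_add, add_mul, map_add, map_add, ha, hb]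
    | smul r a ha => rw [mul_smul_comm, smul_mul_assoc, map_smul, map_smul, ha]
  have hle : S ≤ LinearMap.ker f := by
    rw [hS, Submodule.span_le]
    rintro z ⟨x, y, rfl⟩
    simp [LinearMap.mem_ker, hcomm x y]
  -- the inverse map
  have hconj : ∀ a b : G, IsConj a b →
      S.mkQ (MonoidAlgebra.of k G a) = S.mkQ (MonoidAlgebra.of k G b) := by
    intro a b hab
    obtain ⟨c, rfl⟩ := isConj_iff.1 hab
    rw [Submodule.mkQ_apply, Submodule.mkQ_apply, Submodule.Quotient.eq]
    refine Submodule.subset_span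
      ⟨MonoidAlgebra.of k G (a * c⁻¹), MonoidAlgebra.of k G c, ?_⟩
    rw [← map_mul, ← map_mul]
    congr 2 <;> group
  let q : ConjClasses G → MonoidAlgebra k G ⧸ S :=
    Quotient.lift (fun g => S.mkQ (MonoidAlgebra.of k G g)) hconj
  let F := S.liftQ f hle
  let I : (ConjClasses G →₀ k) →ₗ[k] (MonoidAlgebra k G ⧸ S) := Finsupp.linearCombination k q
  have hI : ∀ g : G, I (Finsupp.single (ConjClasses.mk g) 1) =
      S.mkQ (MonoidAlgebra.of k G g) := by
    intro g
    simp only [I, Finsupp.linearCombination_single, one_smul]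
    rfl
  have hF : ∀ x, F (S.mkQ x) = f x := fun x => rfl
  refine ⟨LinearEquiv.ofLinear F I ?_ ?_, fun g => hf g⟩
  · refine Finsupp.lhom_ext' fun c => LinearMap.ext_ring ?_
    induction c using Quotient.inductionOn with
    | h g =>
      change F (I (Finsupp.single (ConjClasses.mk g) 1)) = Finsupp.single (ConjClasses.mk g) 1
      rw [hI, hF, hf]
  · refine Submodule.linearMap_qext _ (LinearMap.ext fun x => ?_)
    change I (F (S.mkQ x)) = S.mkQ x
    rw [hF]
    induction x using MonoidAlgebra.induction_on with
    | of g => rw [hf, hI]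
    | add a b ha hb => rw [map_add, map_add, map_add, ha, hb]
    | smul r a ha => rw [map_smul, map_smul, map_smul, ha]
end

section
/- Let C be a connected groupoid (any two objects of C are isomorphic) and x an object of C, with automorphism group Aut x = (x ≅ x). On the set L = Σ (y : C), (y ⟶ y) of all loops of C, define (y, γ) ∼ (z, δ) if and only if there exists α : y ⟶ z with γ ≫ α = α ≫ δ. Then ∼ is an equivalence relation, and the map sending the conjugacy class of g ∈ Aut x to the ∼-class of (x, g) is a well-defined bijection ConjClasses (Aut x) ≃ L/∼. -/
open CategoryTheory

/-- Let `C` be a connected groupoid and `x : C`.  On the set `L = Σ y, (y ⟶ y)` of all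
loops of `C`, the relation `(y, γ) ∼ (z, δ) ↔ ∃ α : y ⟶ z, γ ≫ α = α ≫ δ` is an
equivalence relation, and sending the conjugacy class of `g ∈ Aut x` to the class of
the loop `(x, g.hom)` is a well-defined bijection from `ConjClasses (Aut x)` to the
quotient `L/∼`. -/
theorem conjClasses_aut_equiv_loopClasses (C : Type*) [Groupoid C]
    (hconn : ∀ y z : C, Nonempty (y ≅ z)) (x : C) :
    Equivalence (fun p q : Σ y : C, (y ⟶ y) =>
        ∃ α : p.1 ⟶ q.1, p.2 ≫ α = α ≫ q.2) ∧
      ∃ e : ConjClasses (Aut x) ≃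
          Quot (fun p q : Σ y : C, (y ⟶ y) => ∃ α : p.1 ⟶ q.1, p.2 ≫ α = α ≫ q.2),
        ∀ g : Aut x, e (ConjClasses.mk g) = Quot.mk _ ⟨x, g.hom⟩ := by
  have heq : Equivalence (fun p q : Σ y : C, (y ⟶ y) =>
      ∃ α : p.1 ⟶ q.1, p.2 ≫ α = α ≫ q.2) := by
    refine ⟨fun p => ⟨𝟙 _, by simp⟩, ?_, ?_⟩
    · rintro p q ⟨α, h⟩
      refine ⟨Groupoid.inv α, ?_⟩
      have h2 : Groupoid.inv α ≫ (p.2 ≫ α) ≫ Groupoid.inv α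
          = Groupoid.inv α ≫ (α ≫ q.2) ≫ Groupoid.inv α := by rw [h]
      simpa using h2.symm
    · rintro p q r ⟨α, h⟩ ⟨β, k⟩
      exact ⟨α ≫ β, by rw [← Category.assoc, h, Category.assoc, k, Category.assoc]⟩
  have key : ∀ g h : Aut x, IsConj g h ↔ ∃ α : x ⟶ x, g.hom ≫ α = α ≫ h.hom := by
    intro g h
    constructor
    · rintro ⟨c, hc⟩
      exact ⟨(c : Aut x).hom, congrArg Iso.hom hc⟩
    · rintro ⟨α, hα⟩
      let c : Aut x := (Groupoid.isoEquivHom x x).symm α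
      refine ⟨toUnits c, ?_⟩
      change c * g = h * c
      exact Iso.ext hα
  refine ⟨heq, ?_⟩
  let f : ConjClasses (Aut x) →
      Quot (fun p q : Σ y : C, (y ⟶ y) => ∃ α : p.1 ⟶ q.1, p.2 ≫ α = α ≫ q.2) :=
    Quotient.lift (fun g : Aut x => Quot.mk _ ⟨x, g.hom⟩)
      (fun g h hgh => Quot.sound ((key g h).1 hgh))
  refine ⟨Equiv.ofBijective f ⟨?_, ?_⟩, fun g => rfl⟩
  · intro a b
    induction a using Quotient.inductionOn with | _ g
    induction b using Quotient.inductionOn with | _ h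
    intro hab
    exact Quotient.sound ((key g h).2 (heq.eqvGen_iff.1 (Quot.eqvGen_exact hab)))
  · intro q
    induction q using Quot.inductionOn with | _ p
    obtain ⟨y, γ⟩ := p
    obtain ⟨i⟩ := hconn x y
    refine ⟨ConjClasses.mk ((Groupoid.isoEquivHom x x).symm (i.hom ≫ γ ≫ i.inv)), ?_⟩
    refine Quot.sound ⟨i.hom, ?_⟩
    change (i.hom ≫ γ ≫ i.inv) ≫ i.hom = i.hom ≫ γ
    simp
end
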